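/- Suppose K, S : I → Matrix (Fin 3) (Fin 3) ℝ satisfy the evolution equations K' = −K² − S and S' = 2SK + KS − 2tr(S)K − 2tr(K)S + (tr(S)tr(K) − tr(SK))I₃, and suppose at some t₀ ∈ I the matrices K(t₀) and S(t₀) commute. Then K(t) and S(t) commute for all t ∈ I. -/

import Mathlib

open Matrix

attribute [local instance] Matrix.normedAddCommGroup Matrix.normedSpace

/-!
The commutator `C = K * S - S * K` satisfies the homogeneous linear equation
`C' = C * (K - 2 tr(K) • 1)`: the `S * S` terms and the multiples of the identity cancel, the
terms `tr(S) • K` commute with `K`, and the remaining cubic terms regroup as `C * K`. The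
coefficient is continuous, so by uniqueness for linear ordinary differential equations `C`
vanishes on the whole interval once it vanishes at a single point.
-/

/-- A solution of a homogeneous linear ODE with continuous coefficients on an open interval
vanishes identically as soon as it vanishes at one point. -/
theorem linear_ode_eq_zero {E : Type*} [NormedAddCommGroup E] [NormedSpace ℝ E]
    {a b t₀ : ℝ} {A : ℝ → E →L[ℝ] E} {f : ℝ → E} (hA : ContinuousOn A (Set.Ioo a b))
    (hf : ∀ t ∈ Set.Ioo a b, HasDerivAt f (A t (f t)) t) (ht₀ : t₀ ∈ Set.Ioo a b)
    (h₀ : f t₀ = 0) : ∀ t ∈ Set.Ioo a b, f t = 0 := by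
  intro t ht
  -- A uniform Lipschitz constant is only available on a compact subinterval.
  obtain ⟨a', ha, ha'⟩ := exists_between (lt_min ht.1 ht₀.1)
  obtain ⟨b', hb', hb⟩ := exists_between (max_lt ht.2 ht₀.2)
  rw [lt_min_iff] at ha'
  rw [max_lt_iff] at hb'
  have hsub : Set.Icc a' b' ⊆ Set.Ioo a b := Set.Icc_subset_Ioo ha hb
  obtain ⟨M, hM⟩ := isCompact_Icc.exists_bound_of_continuousOn (hA.mono hsub)
  refine ODE_solution_unique_of_mem_Icc (v := fun t x => A t x) (s := fun _ => Set.univ)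
    (K := M.toNNReal) (a := a') (b := b') (f := f) (g := fun _ => 0) (fun s hs => ?_)
    ⟨ha'.2, hb'.2⟩ (fun s hs => (hf s (hsub hs)).continuousAt.continuousWithinAt)
    (fun s hs => hf s (hsub (Set.Ioo_subset_Icc_self hs))) (fun _ _ => trivial)
    continuousOn_const (fun s _ => by simpa using hasDerivAt_const s (0 : E))
    (fun _ _ => trivial) h₀ ⟨ha'.1.le, hb'.1.le⟩
  refine ((A s).lipschitz.weaken ?_).lipschitzOnWith
  exact NNReal.le_toNNReal_of_coe_le (hM s (Set.Ioo_subset_Icc_self hs))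

/-- Multiplication of `3 × 3` real matrices as a continuous bilinear map. It takes the place of
the product rule for normed rings, since the entrywise supremum norm is not submultiplicative. -/
noncomputable def mulCLM : Matrix (Fin 3) (Fin 3) ℝ →L[ℝ] Matrix (Fin 3) (Fin 3) ℝ →L[ℝ]
    Matrix (Fin 3) (Fin 3) ℝ :=
  (LinearMap.mul ℝ (Matrix (Fin 3) (Fin 3) ℝ)).toContinuousBilinearMap

/-- The algebra behind the linear equation for the commutator, with arbitrary scalars in place
of the traces. -/
theorem commutator_identity (K S : Matrix (Fin 3) (Fin 3) ℝ) (p q r : ℝ) :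
    (K * (2 • (S * K) + K * S - (2 * p) • K - (2 * q) • S + r • 1) + (-K ^ 2 - S) * S)
      - (S * (-K ^ 2 - S) + (2 • (S * K) + K * S - (2 * p) • K - (2 * q) • S + r • 1) * K)
      = (K * S - S * K) * (K - (2 * q) • 1) := by
  simp only [mul_add, add_mul, mul_sub, sub_mul, mul_smul_comm, smul_mul_assoc, mul_one, one_mul,
    pow_two, neg_mul, mul_neg, mul_assoc, smul_sub]
  abel

/-- If `K` and `S` satisfy the silent-universe evolution equations and commute
at one instant, they commute at all times. -/
theorem commutation_propagates (a b t₀ : ℝ)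
    (K S : ℝ → Matrix (Fin 3) (Fin 3) ℝ)
    (hK : ∀ t ∈ Set.Ioo a b, HasDerivAt K (-(K t) ^ 2 - S t) t)
    (hS : ∀ t ∈ Set.Ioo a b, HasDerivAt S
      (2 • (S t * K t) + K t * S t - (2 * (S t).trace) • K t
        - (2 * (K t).trace) • S t
        + ((S t).trace * (K t).trace - (S t * K t).trace) •
            (1 : Matrix (Fin 3) (Fin 3) ℝ)) t)
    (hKcont : ContinuousOn K (Set.Ioo a b))
    (hScont : ContinuousOn S (Set.Ioo a b))
    (ht₀ : t₀ ∈ Set.Ioo a b)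
    (hcomm : K t₀ * S t₀ = S t₀ * K t₀) :
    ∀ t ∈ Set.Ioo a b, K t * S t = S t * K t := by
  have hcoef : ContinuousOn (fun t => mulCLM.flip
      (K t - (2 * (K t).trace) • (1 : Matrix (Fin 3) (Fin 3) ℝ))) (Set.Ioo a b) := by
    have htr : Continuous fun X : Matrix (Fin 3) (Fin 3) ℝ => X.trace :=
      continuous_id.matrix_trace
    have hX : Continuous fun X : Matrix (Fin 3) (Fin 3) ℝ =>
        mulCLM.flip (X - (2 * X.trace) • (1 : Matrix (Fin 3) (Fin 3) ℝ)) := by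
      fun_prop
    exact hX.comp_continuousOn hKcont
  intro t ht
  refine sub_eq_zero.mp (linear_ode_eq_zero (f := fun t => K t * S t - S t * K t) hcoef
    (fun s hs => ?_) ht₀ (sub_eq_zero.mpr hcomm) t ht)
  have h := (mulCLM.hasDerivAt_of_bilinear (fun _ => hK s hs) (fun _ => hS s hs)).sub
    (mulCLM.hasDerivAt_of_bilinear (fun _ => hS s hs) (fun _ => hK s hs))
  exact h.congr_deriv (commutator_identity (K s) (S s) (S s).trace (K s).trace _)
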